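/- Let $N \ge 1$, let $y_0, y \in \mathbb{R}^N \setminus \{0\}$, and let $\kappa, \vartheta > 0$ satisfy $\kappa + 2\vartheta > N$. Set $\tau := \min\{\kappa, 2\vartheta, \kappa + 2\vartheta - N\}$ and, for $\rho \ge 1$, $$I(\rho) := \int_{\mathbb{R}^N} (1 + |x|)^{-\kappa} (1 + |x - \rho y_0|)^{-\vartheta} (1 + |x - \rho y|)^{-\vartheta}\, dx .$$ Then the integrand is integrable for every $\rho \ge 1$, and the following hold. (i) If $\max\{\kappa, 2\vartheta\} \ne N$, then there exists a constant $C_2 > 0$, depending only on $N, \kappa, \vartheta, |y_0|, |y|$, such that $I(\rho) \le C_2\, \rho^{-\tau}$ for all $\rho \ge 1$. (ii) In the borderline case $\max\{\kappa, 2\vartheta\} = N$, there exists a constant $C_2 > 0$, depending only on $N, \kappa, \vartheta, |y_0|, |y|$, such that $I(\rho) \le C_2\, \rho^{-\tau} (1 + \log \rho)$ for all $\rho \ge 1$. (iii) If $2\vartheta = N$, $\kappa < N$ and $|y_0 - y| \ge d$ for some $d > 0$, then there exists a constant $C_2 > 0$, depending only on $N, \kappa, \vartheta, |y_0|, |y|,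 d$, such that $I(\rho) \le C_2\, \rho^{-\tau}$ for all $\rho \ge 1$. (If $|y_0| \ne |y|$, one may take $d = \big||y_0| - |y|\big|$, so that $C_2$ depends only on $N, \kappa, \vartheta, |y_0|, |y|$.) -/

import Mathlib

/-- The function `x ↦ (1+|x|)^{-κ} (1+|x-ρ y₀|)^{-ϑ} (1+|x-ρ y|)^{-ϑ}` on `ℝ^N`. -/
noncomputable def tripleInteraction {N : ℕ} (κ ϑ ρ : ℝ) (y₀ y x : EuclideanSpace ℝ (Fin N)) : ℝ :=
  (1 + ‖x‖) ^ (-κ) * (1 + ‖x - ρ • y₀‖) ^ (-ϑ) * (1 + ‖x - ρ • y‖) ^ (-ϑ)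

/-- The decay exponent `τ = min{κ, 2ϑ, κ + 2ϑ - N}`. -/
noncomputable def interactionExponent (N : ℕ) (κ ϑ : ℝ) : ℝ :=
  min κ (min (2 * ϑ) (κ + 2 * ϑ - (N : ℝ)))

open MeasureTheory Module Set Metric

section RadialIntegrals

variable {E : Type*} [NormedAddCommGroup E] [NormedSpace ℝ E] [FiniteDimensional ℝ E]
  [MeasurableSpace E] [BorelSpace E] [Nontrivial E] (μ : Measure E) [μ.IsAddHaarMeasure]

/-- Passing to polar coordinates, the integral of `(1 + |x|)^{-κ}` over a radial set is bounded
by a one-dimensional integral. -/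
theorem setIntegral_one_add_norm_rpow_le {S : Set ℝ} (hS : MeasurableSet S) (κ : ℝ)
    (hint : IntegrableOn (fun t : ℝ => (1 + t) ^ ((finrank ℝ E : ℝ) - 1 - κ)) (Ioi 0 ∩ S)) :
    ∫ x in (fun x : E => ‖x‖) ⁻¹' S, (1 + ‖x‖) ^ (-κ) ∂μ ≤
      finrank ℝ E * μ.real (ball 0 1) *
        ∫ t in Ioi 0 ∩ S, (1 + t) ^ ((finrank ℝ E : ℝ) - 1 - κ) := by
  have hd : 1 ≤ finrank ℝ E := finrank_pos
  have hmeas : MeasurableSet ((fun x : E => ‖x‖) ⁻¹' S) := measurable_norm hS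
  have key : ∫ x in (fun x : E => ‖x‖) ⁻¹' S, (1 + ‖x‖) ^ (-κ) ∂μ =
      finrank ℝ E * μ.real (ball 0 1) *
        ∫ t in Ioi 0 ∩ S, t ^ (finrank ℝ E - 1) * (1 + t) ^ (-κ) := by
    have h1 := integral_fun_norm_addHaar μ (S.indicator fun t : ℝ => (1 + t) ^ (-κ))
    rw [nsmul_eq_mul, smul_eq_mul, ← mul_assoc] at h1
    rw [← integral_indicator hmeas]
    refine Eq.trans (integral_congr_ae (Filter.Eventually.of_forall fun x => ?_)) (h1.trans ?_)
    · rfl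
    · rw [← setIntegral_indicator hS]
      congr 2
      ext t
      by_cases ht : t ∈ S <;> simp [ht]
  rw [key]
  refine mul_le_mul_of_nonneg_left ?_ (by positivity)
  refine integral_mono_of_nonneg ?_ hint ?_
  · filter_upwards [ae_restrict_mem (measurableSet_Ioi.inter hS)] with t ht
    have : (0 : ℝ) < t := ht.1
    simp only [Pi.zero_apply]
    positivity
  · filter_upwards [ae_restrict_mem (measurableSet_Ioi.inter hS)] with t ht
    have ht0 : (0 : ℝ) < t := ht.1
    have h2 : (1 + t) ^ ((finrank ℝ E : ℝ) - 1 - κ) =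
        (1 + t) ^ (finrank ℝ E - 1) * (1 + t) ^ (-κ) := by
      rw [← Real.rpow_natCast, ← Real.rpow_add (by positivity), Nat.cast_sub hd, Nat.cast_one,
        sub_eq_add_neg _ κ]
    rw [h2]
    gcongr
    linarith

theorem setIntegral_closedBall_one_add_norm_rpow_le {R : ℝ} (hR : 0 ≤ R) (κ : ℝ) :
    ∫ x in closedBall (0 : E) R, (1 + ‖x‖) ^ (-κ) ∂μ ≤
      finrank ℝ E * μ.real (ball 0 1) *
        ∫ t in (0 : ℝ)..R, (1 + t) ^ ((finrank ℝ E : ℝ) - 1 - κ) := by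
  have hs : (fun x : E => ‖x‖) ⁻¹' Iic R = closedBall 0 R := by ext; simp
  rw [← hs, intervalIntegral.integral_of_le hR, ← Ioi_inter_Iic]
  refine setIntegral_one_add_norm_rpow_le μ measurableSet_Iic κ ?_
  rw [Ioi_inter_Iic]
  refine (ContinuousOn.integrableOn_Icc fun t ht => ?_).mono_set Ioc_subset_Icc_self
  have : 1 + t ≠ 0 := by linarith [ht.1]
  exact ContinuousAt.continuousWithinAt (by fun_prop (disch := simp [this]))

/-- Tail of the integral of `(1 + |x|)^{-s}` with `s` above the dimension. -/
theorem setIntegral_norm_gt_one_add_norm_rpow_le {s : ℝ} (hs : (finrank ℝ E : ℝ) < s) {R : ℝ}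
    (hR : 0 ≤ R) :
    ∫ x in {x : E | R < ‖x‖}, (1 + ‖x‖) ^ (-s) ∂μ ≤
      finrank ℝ E * μ.real (ball 0 1) / (s - finrank ℝ E) *
        (1 + R) ^ ((finrank ℝ E : ℝ) - s) := by
  have hi : IntegrableOn (fun t : ℝ => (1 + t) ^ ((finrank ℝ E : ℝ) - 1 - s)) (Ioi R) := by
    simpa only [add_comm] using integrableOn_add_rpow_Ioi_of_lt (a := (finrank ℝ E : ℝ) - 1 - s)
      (m := 1) (c := R) (by linarith) (by linarith)
  have hinter : Ioi (0 : ℝ) ∩ Ioi R = Ioi R := by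
    rw [Ioi_inter_Ioi, max_eq_right hR]
  refine (setIntegral_one_add_norm_rpow_le μ (S := Ioi R) measurableSet_Ioi s
    (by rwa [hinter])).trans_eq ?_
  have hI : ∫ t in Ioi R, (1 + t) ^ ((finrank ℝ E : ℝ) - 1 - s) =
      (1 + R) ^ ((finrank ℝ E : ℝ) - s) / (s - finrank ℝ E) := by
    have h1 := (measurePreserving_add_left volume (1 : ℝ)).setIntegral_preimage_emb
      (measurableEmbedding_addLeft 1) (fun t : ℝ => t ^ ((finrank ℝ E : ℝ) - 1 - s)) (Ioi (1 + R))
    rw [preimage_const_add_Ioi, add_sub_cancel_left] at h1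
    rw [h1, integral_Ioi_rpow_of_lt (by linarith) (by linarith),
      show (finrank ℝ E : ℝ) - 1 - s + 1 = finrank ℝ E - s by ring, ← neg_sub s, neg_div_neg_eq]
  rw [hinter, hI]
  ring

/-- Polynomial growth of the integral of `(1 + |x|)^{-κ}` over balls. -/
theorem exists_setIntegral_closedBall_le_rpow {κ p : ℝ} (hp : 0 ≤ p)
    (hpκ : (finrank ℝ E : ℝ) - κ ≤ p) (h : 0 < p ∨ (finrank ℝ E : ℝ) < κ) :
    ∃ C : ℝ, 0 ≤ C ∧ ∀ R : ℝ, 0 ≤ R →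
      ∫ x in closedBall (0 : E) R, (1 + ‖x‖) ^ (-κ) ∂μ ≤ C * (1 + R) ^ p := by
  by_cases hκ : (finrank ℝ E : ℝ) < κ
  · have h0 : ∀ x : E, 0 ≤ (1 + ‖x‖) ^ (-κ) := fun x => by positivity
    refine ⟨∫ x : E, (1 + ‖x‖) ^ (-κ) ∂μ, integral_nonneg h0, fun R hR => ?_⟩
    refine (setIntegral_le_integral (integrable_one_add_norm hκ)
      (Filter.Eventually.of_forall h0)).trans ?_
    exact le_mul_of_one_le_right (integral_nonneg h0)
      (Real.one_le_rpow (by linarith) hp)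
  · replace h : 0 < p := h.resolve_right hκ
    refine ⟨finrank ℝ E * μ.real (ball 0 1) * p⁻¹, by positivity, fun R hR => ?_⟩
    refine (setIntegral_closedBall_one_add_norm_rpow_le μ hR κ).trans ?_
    rw [mul_assoc (finrank ℝ E * μ.real (ball (0 : E) 1))]
    refine mul_le_mul_of_nonneg_left ?_ (by positivity)
    have hI : ∫ t in (0 : ℝ)..R, (1 + t) ^ (p - 1) = ((1 + R) ^ p - 1) / p := by
      rw [intervalIntegral.integral_comp_add_left (fun t : ℝ => t ^ (p - 1)) 1,
        integral_rpow (Or.inl (by linarith))]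
      simp
    calc ∫ t in (0 : ℝ)..R, (1 + t) ^ ((finrank ℝ E : ℝ) - 1 - κ)
        ≤ ∫ t in (0 : ℝ)..R, (1 + t) ^ (p - 1) := by
          refine intervalIntegral.integral_mono_on hR ?_ ?_ fun t ht => ?_
          · refine ContinuousOn.intervalIntegrable_of_Icc hR fun t ht => ?_
            have : 1 + t ≠ 0 := by linarith [ht.1]
            exact ContinuousAt.continuousWithinAt (by fun_prop (disch := simp [this]))
          · refine ContinuousOn.intervalIntegrable_of_Icc hR fun t ht => ?_
            have : 1 + t ≠ 0 := by linarith [ht.1]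
            exact ContinuousAt.continuousWithinAt (by fun_prop (disch := simp [this]))
          · exact Real.rpow_le_rpow_of_exponent_le (by linarith [ht.1]) (by linarith)
      _ = ((1 + R) ^ p - 1) / p := hI
      _ ≤ p⁻¹ * (1 + R) ^ p := by
          rw [div_eq_inv_mul]
          refine mul_le_mul_of_nonneg_left (by linarith) (by positivity)

/-- Growth of the integral of `(1 + |x|)^{-κ}` over balls, up to the exponent equal to the
dimension. -/
theorem exists_setIntegral_closedBall_le_rpow_mul_log {κ : ℝ} (hκ : κ ≤ (finrank ℝ E : ℝ)) :
    ∃ C : ℝ, 0 ≤ C ∧ ∀ R : ℝ, 0 ≤ R →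
      ∫ x in closedBall (0 : E) R, (1 + ‖x‖) ^ (-κ) ∂μ ≤
        C * ((1 + R) ^ ((finrank ℝ E : ℝ) - κ) * Real.log (1 + R)) := by
  refine ⟨finrank ℝ E * μ.real (ball 0 1), by positivity, fun R hR => ?_⟩
  refine (setIntegral_closedBall_one_add_norm_rpow_le μ hR κ).trans ?_
  refine mul_le_mul_of_nonneg_left ?_ (by positivity)
  have hI : ∫ t in (0 : ℝ)..R, (1 + t)⁻¹ = Real.log (1 + R) := by
    rw [intervalIntegral.integral_comp_add_left (fun t : ℝ => t⁻¹) 1,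
      integral_inv_of_pos (by norm_num) (by linarith)]
    simp
  rw [← hI, ← intervalIntegral.integral_const_mul]
  refine intervalIntegral.integral_mono_on hR ?_ ?_ fun t ht => ?_
  · refine ContinuousOn.intervalIntegrable_of_Icc hR fun t ht => ?_
    have : 1 + t ≠ 0 := by linarith [ht.1]
    exact ContinuousAt.continuousWithinAt (by fun_prop (disch := simp [this]))
  · refine ContinuousOn.intervalIntegrable_of_Icc hR fun t ht => ?_
    have : 1 + t ≠ 0 := by linarith [ht.1]
    exact ContinuousAt.continuousWithinAt (by fun_prop (disch := simp [this]))
  · have ht0 : 0 < 1 + t := by linarith [ht.1]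
    rw [show (finrank ℝ E : ℝ) - 1 - κ = (finrank ℝ E - κ) + (-1) by ring,
      Real.rpow_add ht0, Real.rpow_neg_one]
    gcongr
    exact ht.2

end RadialIntegrals

section TwoCenters

variable {E : Type*} [NormedAddCommGroup E]

theorem two_center_le_add {κ σ : ℝ} (hκ : 0 ≤ κ) (hσ : 0 ≤ σ) (z x : E) :
    (1 + ‖x‖) ^ (-κ) * (1 + ‖x - z‖) ^ (-σ) ≤
      (1 + ‖x‖) ^ (-(κ + σ)) + (1 + ‖x - z‖) ^ (-(κ + σ)) := by
  have hu : 0 < 1 + ‖x‖ := by positivity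
  have hv : 0 < 1 + ‖x - z‖ := by positivity
  have e1 : (1 + ‖x‖) ^ (-(κ + σ)) = (1 + ‖x‖) ^ (-κ) * (1 + ‖x‖) ^ (-σ) := by
    rw [← Real.rpow_add hu]; ring_nf
  have e2 : (1 + ‖x - z‖) ^ (-(κ + σ)) = (1 + ‖x - z‖) ^ (-κ) * (1 + ‖x - z‖) ^ (-σ) := by
    rw [← Real.rpow_add hv]; ring_nf
  rcases le_total (1 + ‖x‖) (1 + ‖x - z‖) with h | h
  · refine le_add_of_le_of_nonneg ?_ (by positivity)
    rw [e1]
    exact mul_le_mul_of_nonneg_left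
      (Real.rpow_le_rpow_of_nonpos hu h (by linarith)) (by positivity)
  · refine le_add_of_nonneg_of_le (by positivity) ?_
    rw [e2]
    exact mul_le_mul_of_nonneg_right
      (Real.rpow_le_rpow_of_nonpos hv h (by linarith)) (by positivity)

/-- Pointwise splitting of a product of two power weights into the contributions of a ball around
each of the two centers and of the exterior of a ball. -/
theorem two_center_le_indicators {κ σ : ℝ} (hκ : 0 ≤ κ) (hσ : 0 ≤ σ) {R : ℝ} (hR : 0 ≤ R)
    {z : E} (hz : ‖z‖ = 2 * R) (x : E) :
    (1 + ‖x‖) ^ (-κ) * (1 + ‖x - z‖) ^ (-σ) ≤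
      (1 + R) ^ (-σ) * (closedBall (0 : E) R).indicator (fun x => (1 + ‖x‖) ^ (-κ)) x +
      (1 + R) ^ (-κ) * (closedBall (0 : E) R).indicator (fun x => (1 + ‖x‖) ^ (-σ)) (x - z) +
      3 ^ σ * {x : E | R < ‖x‖}.indicator (fun x => (1 + ‖x‖) ^ (-(κ + σ))) x := by
  have hu : 0 < 1 + ‖x‖ := by positivity
  have hv : 0 < 1 + ‖x - z‖ := by positivity
  have n1 : 0 ≤ (1 + R) ^ (-σ) * (closedBall (0 : E) R).indicator (fun x => (1 + ‖x‖) ^ (-κ)) x :=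
    mul_nonneg (by positivity) (indicator_nonneg (fun x _ => by positivity) _)
  have n2 : 0 ≤ (1 + R) ^ (-κ) *
      (closedBall (0 : E) R).indicator (fun x => (1 + ‖x‖) ^ (-σ)) (x - z) :=
    mul_nonneg (by positivity) (indicator_nonneg (fun x _ => by positivity) _)
  have n3 : 0 ≤ 3 ^ σ * {x : E | R < ‖x‖}.indicator (fun x => (1 + ‖x‖) ^ (-(κ + σ))) x :=
    mul_nonneg (by positivity) (indicator_nonneg (fun x _ => by positivity) _)
  have tri : ‖z‖ ≤ ‖x‖ + ‖x - z‖ := by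
    have := norm_sub_le x (x - z)
    rwa [sub_sub_cancel] at this
  have tri' : ‖x‖ ≤ ‖x - z‖ + ‖z‖ := by
    have := norm_add_le (x - z) z
    rwa [sub_add_cancel] at this
  by_cases hx : ‖x‖ ≤ R
  · have : (1 + ‖x‖) ^ (-κ) * (1 + ‖x - z‖) ^ (-σ) ≤
        (1 + R) ^ (-σ) * (closedBall (0 : E) R).indicator (fun x => (1 + ‖x‖) ^ (-κ)) x := by
      rw [indicator_of_mem (by simpa using hx), mul_comm]
      exact mul_le_mul_of_nonneg_right
        (Real.rpow_le_rpow_of_nonpos (by positivity) (by linarith) (by linarith)) (by positivity)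
    linarith
  by_cases hxz : ‖x - z‖ ≤ R
  · have : (1 + ‖x‖) ^ (-κ) * (1 + ‖x - z‖) ^ (-σ) ≤ (1 + R) ^ (-κ) *
        (closedBall (0 : E) R).indicator (fun x => (1 + ‖x‖) ^ (-σ)) (x - z) := by
      rw [indicator_of_mem (by simpa using hxz)]
      exact mul_le_mul_of_nonneg_right
        (Real.rpow_le_rpow_of_nonpos (by positivity) (by linarith) (by linarith)) (by positivity)
    linarith
  · have : (1 + ‖x‖) ^ (-κ) * (1 + ‖x - z‖) ^ (-σ) ≤
        3 ^ σ * {x : E | R < ‖x‖}.indicator (fun x => (1 + ‖x‖) ^ (-(κ + σ))) x := by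
      have hmem : x ∈ {x : E | R < ‖x‖} := not_le.mp hx
      rw [indicator_of_mem hmem, neg_add, Real.rpow_add hu, mul_left_comm]
      refine mul_le_mul_of_nonneg_left ?_ (by positivity)
      have h3 : (1 + ‖x‖) / 3 ≤ 1 + ‖x - z‖ := by linarith
      refine (Real.rpow_le_rpow_of_nonpos (by positivity) h3 (by linarith)).trans_eq ?_
      rw [Real.div_rpow hu.le (by norm_num), Real.rpow_neg (by norm_num : (0:ℝ) ≤ 3)]
      field_simp
    linarith

variable [NormedSpace ℝ E] [FiniteDimensional ℝ E] [MeasurableSpace E] [BorelSpace E]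
  (μ : Measure E) [μ.IsAddHaarMeasure]

theorem integrable_two_center {κ σ : ℝ} (hκ : 0 ≤ κ) (hσ : 0 ≤ σ)
    (hκσ : (finrank ℝ E : ℝ) < κ + σ) (z : E) :
    Integrable (fun x : E => (1 + ‖x‖) ^ (-κ) * (1 + ‖x - z‖) ^ (-σ)) μ := by
  have hi := integrable_one_add_norm (E := E) (μ := μ) hκσ
  refine (hi.add (hi.comp_sub_right z)).mono' (Measurable.aestronglyMeasurable (by fun_prop))
    (Filter.Eventually.of_forall fun x => ?_)
  rw [Real.norm_of_nonneg (by positivity)]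
  exact two_center_le_add hκ hσ z x

theorem integral_two_center_le {κ σ : ℝ} (hκ : 0 ≤ κ) (hσ : 0 ≤ σ)
    (hκσ : (finrank ℝ E : ℝ) < κ + σ) {R : ℝ} (hR : 0 ≤ R) {z : E} (hz : ‖z‖ = 2 * R) :
    ∫ x, (1 + ‖x‖) ^ (-κ) * (1 + ‖x - z‖) ^ (-σ) ∂μ ≤
      (1 + R) ^ (-σ) * ∫ x in closedBall (0 : E) R, (1 + ‖x‖) ^ (-κ) ∂μ +
      (1 + R) ^ (-κ) * ∫ x in closedBall (0 : E) R, (1 + ‖x‖) ^ (-σ) ∂μ +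
      3 ^ σ * ∫ x in {x : E | R < ‖x‖}, (1 + ‖x‖) ^ (-(κ + σ)) ∂μ := by
  have hball : ∀ r : ℝ, Integrable
      ((closedBall (0 : E) R).indicator (fun x => (1 + ‖x‖) ^ (-r))) μ := fun r => by
    refine (integrable_indicator_iff measurableSet_closedBall).2
      (ContinuousOn.integrableOn_compact (isCompact_closedBall 0 R) fun x _ => ?_)
    have : 1 + ‖x‖ ≠ 0 := by positivity
    exact ContinuousAt.continuousWithinAt (by fun_prop (disch := simp [this]))
  have hS : MeasurableSet {x : E | R < ‖x‖} := measurableSet_lt measurable_const measurable_norm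
  have htail : Integrable ({x : E | R < ‖x‖}.indicator fun x => (1 + ‖x‖) ^ (-(κ + σ))) μ :=
    (integrable_one_add_norm hκσ).indicator hS
  have i1 := (hball κ).const_mul ((1 + R) ^ (-σ))
  have i2 := ((hball σ).comp_sub_right z).const_mul ((1 + R) ^ (-κ))
  have i3 := htail.const_mul (3 ^ σ)
  refine (integral_mono (integrable_two_center μ hκ hσ hκσ z) ((i1.add i2).add i3)
    (two_center_le_indicators hκ hσ hR hz)).trans_eq ?_
  rw [integral_add' (i1.add i2) i3, integral_add' i1 i2]
  simp only [integral_const_mul]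
  rw [integral_sub_right_eq_self (μ := μ)
    ((closedBall (0 : E) R).indicator fun x => (1 + ‖x‖) ^ (-σ)) z,
    integral_indicator measurableSet_closedBall, integral_indicator measurableSet_closedBall,
    integral_indicator hS]

end TwoCenters

section TwoCenterDecay

variable {E : Type*} [NormedAddCommGroup E] [NormedSpace ℝ E] [FiniteDimensional ℝ E]
  [MeasurableSpace E] [BorelSpace E] [Nontrivial E] (μ : Measure E) [μ.IsAddHaarMeasure]

/-- Bounds on the integrals of the two weights over balls, with a common factor `L`, yield a bound
on the integral of their product. -/
theorem exists_integral_two_center_le_of_closedBall {κ σ τ : ℝ} (hκ : 0 ≤ κ) (hσ : 0 ≤ σ)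
    (hκσ : (finrank ℝ E : ℝ) < κ + σ) (hτ : τ ≤ κ + σ - finrank ℝ E) {L : ℝ → ℝ}
    (hL : ∀ R, 0 ≤ R → 1 ≤ L R)
    (h₁ : ∃ C : ℝ, 0 ≤ C ∧ ∀ R : ℝ, 0 ≤ R →
      ∫ x in closedBall (0 : E) R, (1 + ‖x‖) ^ (-κ) ∂μ ≤ C * ((1 + R) ^ (σ - τ) * L R))
    (h₂ : ∃ C : ℝ, 0 ≤ C ∧ ∀ R : ℝ, 0 ≤ R →
      ∫ x in closedBall (0 : E) R, (1 + ‖x‖) ^ (-σ) ∂μ ≤ C * ((1 + R) ^ (κ - τ) * L R)) :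
    ∃ C : ℝ, 0 ≤ C ∧ ∀ z : E, ∫ x, (1 + ‖x‖) ^ (-κ) * (1 + ‖x - z‖) ^ (-σ) ∂μ ≤
      C * ((1 + ‖z‖ / 2) ^ (-τ) * L (‖z‖ / 2)) := by
  obtain ⟨C₁, hC₁, h₁⟩ := h₁
  obtain ⟨C₂, hC₂, h₂⟩ := h₂
  have hK : 0 ≤ finrank ℝ E * μ.real (ball (0 : E) 1) / (κ + σ - finrank ℝ E) :=
    div_nonneg (by positivity) (by linarith)
  have htail := fun R hR => setIntegral_norm_gt_one_add_norm_rpow_le μ hκσ (R := R) hR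
  generalize finrank ℝ E * μ.real (ball (0 : E) 1) / (κ + σ - finrank ℝ E) = K at hK htail
  refine ⟨C₁ + C₂ + 3 ^ σ * K, by positivity, fun z => ?_⟩
  have hR : 0 ≤ ‖z‖ / 2 := by positivity
  refine (integral_two_center_le μ hκ hσ hκσ hR (by ring)).trans ?_
  generalize ‖z‖ / 2 = R at hR
  have hR1 : 0 < 1 + R := by linarith
  have b₁ : (1 + R) ^ (-σ) * ∫ x in closedBall (0 : E) R, (1 + ‖x‖) ^ (-κ) ∂μ ≤
      C₁ * ((1 + R) ^ (-τ) * L R) := by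
    refine (mul_le_mul_of_nonneg_left (h₁ R hR) (by positivity)).trans_eq ?_
    rw [show -τ = -σ + (σ - τ) by ring, Real.rpow_add hR1]
    ring
  have b₂ : (1 + R) ^ (-κ) * ∫ x in closedBall (0 : E) R, (1 + ‖x‖) ^ (-σ) ∂μ ≤
      C₂ * ((1 + R) ^ (-τ) * L R) := by
    refine (mul_le_mul_of_nonneg_left (h₂ R hR) (by positivity)).trans_eq ?_
    rw [show -τ = -κ + (κ - τ) by ring, Real.rpow_add hR1]
    ring
  have b₃ : 3 ^ σ * ∫ x in {x : E | R < ‖x‖}, (1 + ‖x‖) ^ (-(κ + σ)) ∂μ ≤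
      3 ^ σ * K * ((1 + R) ^ (-τ) * L R) := by
    rw [mul_assoc]
    refine mul_le_mul_of_nonneg_left ((htail R hR).trans ?_) (by positivity)
    refine mul_le_mul_of_nonneg_left ?_ hK
    exact (Real.rpow_le_rpow_of_exponent_le (by linarith) (by linarith)).trans
      (le_mul_of_one_le_right (by positivity) (hL R hR))
  linarith

/-- Decay of the two-center integral away from the borderline case. -/
theorem exists_integral_two_center_le_rpow {κ σ : ℝ} (hκ : 0 ≤ κ) (hσ : 0 ≤ σ)
    (hκσ : (finrank ℝ E : ℝ) < κ + σ) (hmax : max κ σ ≠ finrank ℝ E) :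
    ∃ C : ℝ, 0 ≤ C ∧ ∀ z : E, ∫ x, (1 + ‖x‖) ^ (-κ) * (1 + ‖x - z‖) ^ (-σ) ∂μ ≤
      C * (1 + ‖z‖ / 2) ^ (-min κ (min σ (κ + σ - finrank ℝ E))) := by
  set τ := min κ (min σ (κ + σ - finrank ℝ E))
  have hτκ : τ ≤ κ := min_le_left _ _
  have hτσ : τ ≤ σ := (min_le_right _ _).trans (min_le_left _ _)
  have hτd : τ ≤ κ + σ - finrank ℝ E := (min_le_right _ _).trans (min_le_right _ _)
  have key : ∀ {κ σ : ℝ}, max κ σ ≠ finrank ℝ E → τ ≤ κ → τ ≤ σ →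
      τ ≤ κ + σ - finrank ℝ E → 0 < σ - τ ∨ (finrank ℝ E : ℝ) < κ := by
    intro κ σ hne h1 h2 h3
    rcases lt_trichotomy κ (finrank ℝ E : ℝ) with h | h | h
    · left; linarith
    · left
      have : κ < σ := by
        by_contra! hle
        exact hne (by rw [max_eq_left hle, h])
      linarith
    · exact Or.inr h
  have h₁ := exists_setIntegral_closedBall_le_rpow μ (κ := κ) (p := σ - τ) (by linarith)
    (by linarith) (key hmax hτκ hτσ hτd)
  have h₂ := exists_setIntegral_closedBall_le_rpow μ (κ := σ) (p := κ - τ) (by linarith)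
    (by linarith) (key (by rwa [max_comm]) hτσ hτκ (by linarith))
  have := exists_integral_two_center_le_of_closedBall μ hκ hσ hκσ hτd (L := fun _ => 1)
    (fun _ _ => le_rfl) (by simpa using h₁) (by simpa using h₂)
  simpa using this

/-- Decay of the two-center integral in the borderline case. -/
theorem exists_integral_two_center_le_rpow_mul_log {κ σ : ℝ} (hκ : 0 ≤ κ) (hσ : 0 ≤ σ)
    (hκσ : (finrank ℝ E : ℝ) < κ + σ) (hmax : max κ σ = finrank ℝ E) :
    ∃ C : ℝ, 0 ≤ C ∧ ∀ z : E, ∫ x, (1 + ‖x‖) ^ (-κ) * (1 + ‖x - z‖) ^ (-σ) ∂μ ≤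
      C * ((1 + ‖z‖ / 2) ^ (-min κ (min σ (κ + σ - finrank ℝ E))) *
        (1 + Real.log (1 + ‖z‖ / 2))) := by
  have hκd : κ ≤ finrank ℝ E := hmax ▸ le_max_left κ σ
  have hσd : σ ≤ finrank ℝ E := hmax ▸ le_max_right κ σ
  have hτ : min κ (min σ (κ + σ - finrank ℝ E)) = κ + σ - finrank ℝ E := by
    rw [min_eq_right (by linarith : κ + σ - finrank ℝ E ≤ σ), min_eq_right (by linarith)]
  have ball : ∀ {κ p : ℝ}, κ ≤ finrank ℝ E → p = finrank ℝ E - κ →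
      ∃ C : ℝ, 0 ≤ C ∧ ∀ R : ℝ, 0 ≤ R → ∫ x in closedBall (0 : E) R, (1 + ‖x‖) ^ (-κ) ∂μ ≤
        C * ((1 + R) ^ p * (1 + Real.log (1 + R))) := by
    rintro κ p hκ rfl
    obtain ⟨C, hC, h⟩ := exists_setIntegral_closedBall_le_rpow_mul_log μ hκ
    refine ⟨C, hC, fun R hR => (h R hR).trans ?_⟩
    gcongr
    linarith
  rw [hτ]
  exact exists_integral_two_center_le_of_closedBall μ hκ hσ hκσ le_rfl
    (L := fun R => 1 + Real.log (1 + R))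
    (fun R hR => le_add_of_nonneg_right (Real.log_nonneg (by linarith)))
    (ball hκd (by ring)) (ball hσd (by ring))

end TwoCenterDecay

/-- Two equal power weights with centers at distance at least `2 * D` are controlled by the sum of
weights with a single center; the separation may be traded for a factor `(1 + D)^{-ε}`. -/
theorem one_add_norm_sub_rpow_mul_le {E : Type*} [NormedAddCommGroup E] {ϑ ε D : ℝ} (hε : 0 ≤ ε)
    (hεϑ : ε ≤ ϑ) (hD : 0 ≤ D) {z₀ z : E} (hz : 2 * D ≤ ‖z₀ - z‖) (x : E) :
    (1 + ‖x - z₀‖) ^ (-ϑ) * (1 + ‖x - z‖) ^ (-ϑ) ≤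
      (1 + D) ^ (-ε) * ((1 + ‖x - z₀‖) ^ (-(2 * ϑ - ε)) + (1 + ‖x - z‖) ^ (-(2 * ϑ - ε))) := by
  have key : ∀ u v : ℝ, 1 ≤ u → u ≤ v → 1 + D ≤ v →
      u ^ (-ϑ) * v ^ (-ϑ) ≤ (1 + D) ^ (-ε) * u ^ (-(2 * ϑ - ε)) := by
    intro u v hu huv hv
    have hu0 : 0 < u := by linarith
    have hv0 : 0 < v := by linarith
    calc u ^ (-ϑ) * v ^ (-ϑ) = v ^ (-ε) * (u ^ (-ϑ) * v ^ (-(ϑ - ε))) := by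
          rw [show -ϑ = -ε + -(ϑ - ε) by ring, Real.rpow_add hv0]; ring
      _ ≤ (1 + D) ^ (-ε) * (u ^ (-ϑ) * u ^ (-(ϑ - ε))) := by
          gcongr ?_ * (_ * ?_)
          · exact Real.rpow_le_rpow_of_nonpos (by linarith) hv (by linarith)
          · exact Real.rpow_le_rpow_of_nonpos hu0 huv (by linarith)
      _ = (1 + D) ^ (-ε) * u ^ (-(2 * ϑ - ε)) := by
          rw [← Real.rpow_add hu0]; ring_nf
  have tri : ‖z₀ - z‖ ≤ ‖x - z₀‖ + ‖x - z‖ := by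
    have := norm_sub_le (x - z) (x - z₀)
    rw [sub_sub_sub_cancel_left] at this
    linarith
  have h0 := norm_nonneg (x - z₀)
  have h1 := norm_nonneg (x - z)
  rw [mul_add]
  rcases le_total ‖x - z₀‖ ‖x - z‖ with h | h
  · exact le_add_of_le_of_nonneg (key _ _ (by linarith) (by linarith) (by linarith))
      (by positivity)
  · refine le_add_of_nonneg_of_le (by positivity) ?_
    rw [mul_comm]
    exact key _ _ (by linarith) (by linarith) (by linarith)

theorem integrable_tripleInteraction_and_integral_le {N : ℕ} {κ ϑ ε D ρ : ℝ} (hκ : 0 ≤ κ)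
    (hε : 0 ≤ ε) (hεϑ : ε ≤ ϑ) (hκϑ : (N : ℝ) < κ + (2 * ϑ - ε)) (hD : 0 ≤ D)
    {y₀ y : EuclideanSpace ℝ (Fin N)} (hy : 2 * D ≤ ‖ρ • y₀ - ρ • y‖) :
    Integrable (tripleInteraction κ ϑ ρ y₀ y) ∧
      ∫ x, tripleInteraction κ ϑ ρ y₀ y x ≤ (1 + D) ^ (-ε) *
        ((∫ x, (1 + ‖x‖) ^ (-κ) * (1 + ‖x - ρ • y₀‖) ^ (-(2 * ϑ - ε))) +
          ∫ x, (1 + ‖x‖) ^ (-κ) * (1 + ‖x - ρ • y‖) ^ (-(2 * ϑ - ε))) := by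
  have hfin : (finrank ℝ (EuclideanSpace ℝ (Fin N)) : ℝ) < κ + (2 * ϑ - ε) := by simpa using hκϑ
  have i₀ := integrable_two_center volume hκ (by linarith) hfin (ρ • y₀)
  have i₁ := integrable_two_center volume hκ (by linarith) hfin (ρ • y)
  have i := (i₀.add i₁).const_mul ((1 + D) ^ (-ε))
  have hle : ∀ x, tripleInteraction κ ϑ ρ y₀ y x ≤ (1 + D) ^ (-ε) *
      ((1 + ‖x‖) ^ (-κ) * (1 + ‖x - ρ • y₀‖) ^ (-(2 * ϑ - ε)) +
        (1 + ‖x‖) ^ (-κ) * (1 + ‖x - ρ • y‖) ^ (-(2 * ϑ - ε))) := fun x => by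
    rw [tripleInteraction, mul_assoc, ← mul_add, mul_left_comm ((1 + D) ^ (-ε))]
    exact mul_le_mul_of_nonneg_left (one_add_norm_sub_rpow_mul_le hε hεϑ hD hy x) (by positivity)
  have hint : Integrable (tripleInteraction κ ϑ ρ y₀ y) := by
    refine i.mono' (Measurable.aestronglyMeasurable (by unfold tripleInteraction; fun_prop))
      (Filter.Eventually.of_forall fun x => ?_)
    rw [Real.norm_of_nonneg (by unfold tripleInteraction; positivity)]
    exact hle x
  refine ⟨hint, (integral_mono hint i hle).trans_eq ?_⟩
  simp only [Pi.add_apply]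
  rw [integral_const_mul, integral_add i₀ i₁]

theorem one_add_mul_div_two_rpow_neg_le {a ρ τ : ℝ} (ha : 0 < a) (hρ : 0 < ρ) (hτ : 0 ≤ τ) :
    (1 + ρ * a / 2) ^ (-τ) ≤ (a / 2) ^ (-τ) * ρ ^ (-τ) := by
  rw [← Real.mul_rpow (by positivity) hρ.le]
  exact Real.rpow_le_rpow_of_nonpos (by positivity) (by linarith) (by linarith)

theorem one_add_log_one_add_mul_le {a ρ : ℝ} (ha : 0 < a) (hρ : 1 ≤ ρ) :
    1 + Real.log (1 + ρ * a / 2) ≤ (1 + Real.log (1 + a / 2)) * (1 + Real.log ρ) := by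
  have h1 : Real.log (1 + ρ * a / 2) ≤ Real.log (1 + a / 2) + Real.log ρ := by
    rw [← Real.log_mul (by positivity) (by positivity)]
    exact Real.log_le_log (by positivity) (by linarith)
  have h2 : 0 ≤ Real.log (1 + a / 2) := Real.log_nonneg (by linarith)
  have h3 : 0 ≤ Real.log ρ := Real.log_nonneg hρ
  nlinarith [mul_nonneg h2 h3]

/-- The constants are chosen before the points `y₀`, `y`: they depend only on `N`, `κ`, `ϑ`,
`a = |y₀|`, `b = |y|` and, in the last part, also on a lower bound `d` of `|y₀ - y|`. -/
theorem triple_interaction_integral_estimate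
    (N : ℕ) (hN : 1 ≤ N) (κ ϑ : ℝ) (hκ : 0 < κ) (hϑ : 0 < ϑ) (hκϑ : (N : ℝ) < κ + 2 * ϑ)
    (a b : ℝ) (ha : 0 < a) (hb : 0 < b) :
    (max κ (2 * ϑ) ≠ (N : ℝ) →
      ∃ C₂ : ℝ, 0 < C₂ ∧ ∀ y₀ y : EuclideanSpace ℝ (Fin N), ‖y₀‖ = a → ‖y‖ = b →
        ∀ ρ : ℝ, 1 ≤ ρ →
          MeasureTheory.Integrable (tripleInteraction κ ϑ ρ y₀ y) ∧
          ∫ x, tripleInteraction κ ϑ ρ y₀ y x ≤ C₂ * ρ ^ (-interactionExponent N κ ϑ)) ∧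
    (max κ (2 * ϑ) = (N : ℝ) →
      ∃ C₂ : ℝ, 0 < C₂ ∧ ∀ y₀ y : EuclideanSpace ℝ (Fin N), ‖y₀‖ = a → ‖y‖ = b →
        ∀ ρ : ℝ, 1 ≤ ρ →
          MeasureTheory.Integrable (tripleInteraction κ ϑ ρ y₀ y) ∧
          ∫ x, tripleInteraction κ ϑ ρ y₀ y x ≤
            C₂ * ρ ^ (-interactionExponent N κ ϑ) * (1 + Real.log ρ)) ∧
    (2 * ϑ = (N : ℝ) → κ < (N : ℝ) → ∀ d : ℝ, 0 < d →
      ∃ C₂ : ℝ, 0 < C₂ ∧ ∀ y₀ y : EuclideanSpace ℝ (Fin N), ‖y₀‖ = a → ‖y‖ = b → d ≤ ‖y₀ - y‖ →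
        ∀ ρ : ℝ, 1 ≤ ρ →
          MeasureTheory.Integrable (tripleInteraction κ ϑ ρ y₀ y) ∧
          ∫ x, tripleInteraction κ ϑ ρ y₀ y x ≤ C₂ * ρ ^ (-interactionExponent N κ ϑ)) := by
  have : Nonempty (Fin N) := ⟨⟨0, hN⟩⟩
  have hfin : (finrank ℝ (EuclideanSpace ℝ (Fin N)) : ℝ) = N := by simp
  have hnorm : ∀ {ρ c : ℝ} {z : EuclideanSpace ℝ (Fin N)}, 1 ≤ ρ → ‖z‖ = c →
      ‖ρ • z‖ = ρ * c := fun {ρ c z} hρ hz => by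
    rw [norm_smul, Real.norm_of_nonneg (by linarith), hz]
  have hbasic : ∀ (ρ : ℝ) (y₀ y : EuclideanSpace ℝ (Fin N)),
      Integrable (tripleInteraction κ ϑ ρ y₀ y) ∧
      ∫ x, tripleInteraction κ ϑ ρ y₀ y x ≤
        (∫ x, (1 + ‖x‖) ^ (-κ) * (1 + ‖x - ρ • y₀‖) ^ (-(2 * ϑ))) +
          ∫ x, (1 + ‖x‖) ^ (-κ) * (1 + ‖x - ρ • y‖) ^ (-(2 * ϑ)) := fun ρ y₀ y => by
    simpa using integrable_tripleInteraction_and_integral_le (ρ := ρ) (y₀ := y₀) (y := y)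
      hκ.le le_rfl hϑ.le (by linarith) le_rfl (by simp)
  have hτ : 0 < interactionExponent N κ ϑ :=
    lt_min hκ (lt_min (by linarith) (by linarith))
  refine ⟨fun hmax => ?_, fun hmax => ?_, fun hϑN hκN d hd => ?_⟩
  · obtain ⟨C, hC, hJ⟩ := exists_integral_two_center_le_rpow
      (volume : Measure (EuclideanSpace ℝ (Fin N))) hκ.le (by linarith : 0 ≤ 2 * ϑ)
      (by rwa [hfin]) (by rwa [hfin])
    rw [hfin, ← interactionExponent] at hJ
    set τ := interactionExponent N κ ϑ
    refine ⟨C * ((a / 2) ^ (-τ) + (b / 2) ^ (-τ)) + 1, by positivity,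
      fun y₀ y hy₀ hy ρ hρ => ⟨(hbasic ρ y₀ y).1, (hbasic ρ y₀ y).2.trans ?_⟩⟩
    have hρ0 : 0 < ρ := by linarith
    have h₀ := hJ (ρ • y₀)
    have h₁ := hJ (ρ • y)
    rw [hnorm hρ hy₀] at h₀
    rw [hnorm hρ hy] at h₁
    have g₀ := mul_le_mul_of_nonneg_left (one_add_mul_div_two_rpow_neg_le ha hρ0 hτ.le) hC
    have g₁ := mul_le_mul_of_nonneg_left (one_add_mul_div_two_rpow_neg_le hb hρ0 hτ.le) hC
    have : 0 < ρ ^ (-τ) := by positivity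
    linarith
  · obtain ⟨C, hC, hJ⟩ := exists_integral_two_center_le_rpow_mul_log
      (volume : Measure (EuclideanSpace ℝ (Fin N))) hκ.le (by linarith : 0 ≤ 2 * ϑ)
      (by rwa [hfin]) (by rwa [hfin])
    rw [hfin, ← interactionExponent] at hJ
    set τ := interactionExponent N κ ϑ
    have hla : 0 ≤ Real.log (1 + a / 2) := Real.log_nonneg (by linarith)
    have hlb : 0 ≤ Real.log (1 + b / 2) := Real.log_nonneg (by linarith)
    refine ⟨C * ((a / 2) ^ (-τ) * (1 + Real.log (1 + a / 2)) +
        (b / 2) ^ (-τ) * (1 + Real.log (1 + b / 2))) + 1, by positivity,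
      fun y₀ y hy₀ hy ρ hρ => ⟨(hbasic ρ y₀ y).1, (hbasic ρ y₀ y).2.trans ?_⟩⟩
    have hρ0 : 0 < ρ := by linarith
    have hlρ : 0 ≤ Real.log ρ := Real.log_nonneg hρ
    have key : ∀ {c : ℝ} {z : EuclideanSpace ℝ (Fin N)}, 0 < c → ‖z‖ = c →
        ∫ x, (1 + ‖x‖) ^ (-κ) * (1 + ‖x - ρ • z‖) ^ (-(2 * ϑ)) ≤
          C * (((c / 2) ^ (-τ) * ρ ^ (-τ)) *
            ((1 + Real.log (1 + c / 2)) * (1 + Real.log ρ))) := by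
      intro c z hc hz
      have h := hJ (ρ • z)
      rw [hnorm hρ hz] at h
      refine h.trans (mul_le_mul_of_nonneg_left ?_ hC)
      refine mul_le_mul (one_add_mul_div_two_rpow_neg_le hc hρ0 hτ.le)
        (one_add_log_one_add_mul_le hc hρ) ?_ (by positivity)
      have hρc : 0 < ρ * c := by positivity
      linarith [Real.log_nonneg (show 1 ≤ 1 + ρ * c / 2 by linarith)]
    have h₀ := key ha hy₀
    have h₁ := key hb hy
    have : 0 < ρ ^ (-τ) * (1 + Real.log ρ) := by positivity
    linarith
  · set ε := min ϑ (κ / 2)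
    have hε : 0 < ε := lt_min hϑ (by linarith)
    have hεϑ : ε ≤ ϑ := min_le_left _ _
    have hεκ : ε ≤ κ / 2 := min_le_right _ _
    have hsum : (N : ℝ) < κ + (2 * ϑ - ε) := by linarith
    have hexp : interactionExponent N κ ϑ = κ := by
      rw [interactionExponent, hϑN, add_sub_cancel_right, min_eq_right hκN.le, min_self]
    obtain ⟨C, hC, hJ⟩ := exists_integral_two_center_le_rpow
      (volume : Measure (EuclideanSpace ℝ (Fin N))) hκ.le (by linarith : 0 ≤ 2 * ϑ - ε)
      (by rwa [hfin]) (by rw [hfin]; exact (max_lt hκN (by linarith)).ne)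
    have hmin : min κ (min (2 * ϑ - ε) (κ + (2 * ϑ - ε) - N)) = κ - ε := by
      rw [show κ + (2 * ϑ - ε) - N = κ - ε by linarith,
        min_eq_right (by linarith : κ - ε ≤ 2 * ϑ - ε), min_eq_right (by linarith)]
    rw [hfin, hmin] at hJ
    rw [hexp]
    refine ⟨(d / 2) ^ (-ε) * (C * ((a / 2) ^ (-(κ - ε)) + (b / 2) ^ (-(κ - ε)))) + 1,
      by positivity, fun y₀ y hy₀ hy hyd ρ hρ => ?_⟩
    have hρ0 : 0 < ρ := by linarith
    have hsep : 2 * (ρ * d / 2) ≤ ‖ρ • y₀ - ρ • y‖ := by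
      rw [← smul_sub, norm_smul, Real.norm_of_nonneg hρ0.le, mul_div_cancel₀ _ two_ne_zero]
      exact mul_le_mul_of_nonneg_left hyd hρ0.le
    obtain ⟨hint, hle⟩ := integrable_tripleInteraction_and_integral_le hκ.le hε.le hεϑ hsum
      (by positivity) hsep
    refine ⟨hint, hle.trans ?_⟩
    have h₀ := hJ (ρ • y₀)
    have h₁ := hJ (ρ • y)
    rw [hnorm hρ hy₀] at h₀
    rw [hnorm hρ hy] at h₁
    have hκε : 0 ≤ κ - ε := by linarith
    have g₀ := mul_le_mul_of_nonneg_left (one_add_mul_div_two_rpow_neg_le ha hρ0 hκε) hC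
    have g₁ := mul_le_mul_of_nonneg_left (one_add_mul_div_two_rpow_neg_le hb hρ0 hκε) hC
    have hρκ : 0 < ρ ^ (-κ) := by positivity
    calc _ ≤ ((d / 2) ^ (-ε) * ρ ^ (-ε)) *
          (C * ((a / 2) ^ (-(κ - ε)) * ρ ^ (-(κ - ε))) +
            C * ((b / 2) ^ (-(κ - ε)) * ρ ^ (-(κ - ε)))) := by
          refine mul_le_mul (one_add_mul_div_two_rpow_neg_le hd hρ0 hε.le)
            (add_le_add (h₀.trans g₀) (h₁.trans g₁)) ?_ (by positivity)
          exact add_nonneg (integral_nonneg fun x => by positivity)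
            (integral_nonneg fun x => by positivity)
      _ = (d / 2) ^ (-ε) * (C * ((a / 2) ^ (-(κ - ε)) + (b / 2) ^ (-(κ - ε)))) * ρ ^ (-κ) := by
          rw [show -κ = -ε + -(κ - ε) by ring, Real.rpow_add hρ0]
          ring
      _ ≤ _ := by linarith
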